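/- The matrix S̃_r is symmetric positive semidefinite, and its K_r-th largest eigenvalue satisfies λ_{K_r}(S̃_r) ≥ θ_{r,min}^2 · θ_{c,min}^2 · n_{r,min} · n_{c,min} · λ_min(Σ_{l=1}^L B_l B_l^T), where λ_min(Σ_{l=1}^L B_l B_l^T) denotes the smallest eigenvalue of the K_r × K_r positive semidefinite matrix Σ_{l=1}^L B_l B_l^T. -/

import Mathlib

open Matrix Finset

/-!
With `Y = Θ_r Z_r`, `X = Θ_cᴴ Z_c` and `M = ∑ l, B_l (Xᴴ X) B_lᴴ`, the matrix `S̃_r` is `Y M Yᴴ`.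
Since every row of a membership matrix has a single nonzero entry, the Gram matrices `Yᴴ Y` and
`Xᴴ X` are diagonal, so in the Loewner order `Yᴴ Y ≥ r • 1` and `Xᴴ X ≥ c • 1` with
`r = θ_{r,min}² n_{r,min}` and `c = θ_{c,min}² n_{c,min}`. Hence `M ≥ m • 1` for
`m = c λ_min(∑ l, B_l B_lᴴ)`, and `Yᴴ (Y M Yᴴ) Y ≥ m • (Yᴴ Y)² ≥ (m r) • Yᴴ Y`: on the range of
`Y`, of dimension `K_r`, the Rayleigh quotient of `S̃_r` is at least `m r`, and Courant-Fischer
concludes.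
-/

section Eigenvalues

open scoped ComplexOrder MatrixOrder

variable {𝕜 n k : Type*} [RCLike 𝕜] [Fintype n] [DecidableEq n] [Fintype k]

theorem re_star_dotProduct_mulVec_conjTranspose_mul_diagonal_mul (Y : Matrix n k 𝕜) (d : n → ℝ)
    (x : k → 𝕜) :
    RCLike.re (star x ⬝ᵥ (Yᴴ * diagonal (fun i ↦ (d i : 𝕜)) * Y) *ᵥ x) =
      ∑ i, d i * ‖(Y *ᵥ x) i‖ ^ 2 := by
  have hquad : star x ⬝ᵥ (Yᴴ * diagonal (fun i ↦ (d i : 𝕜)) * Y) *ᵥ x =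
      star (Y *ᵥ x) ⬝ᵥ diagonal (fun i ↦ (d i : 𝕜)) *ᵥ (Y *ᵥ x) := by
    rw [star_mulVec, ← mulVec_mulVec, ← mulVec_mulVec, dotProduct_mulVec]
  rw [hquad, dotProduct, map_sum]
  refine sum_congr rfl fun i _ ↦ ?_
  rw [mulVec_diagonal, mul_left_comm, RCLike.re_ofReal_mul, Pi.star_apply, RCLike.star_def,
    RCLike.conj_mul, ← RCLike.ofReal_pow, RCLike.ofReal_re]

theorem card_le_card_filter_nonneg_of_posSemidef {d : n → ℝ} {Y : Matrix n k 𝕜}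
    (hY : Function.Injective Y.mulVec)
    (h : (Yᴴ * diagonal (fun i ↦ (d i : 𝕜)) * Y).PosSemidef) :
    Fintype.card k ≤ #{i | 0 ≤ d i} := by
  let R : Matrix {i // 0 ≤ d i} k 𝕜 := Y.submatrix (↑) id
  have hR : Function.Injective R.mulVecLin := by
    refine (injective_iff_map_eq_zero _).2 fun x hx ↦ ?_
    have hzero : ∀ i, 0 ≤ d i → (Y *ᵥ x) i = 0 := fun i hi ↦ congrFun hx ⟨i, hi⟩
    have hle : ∀ i ∈ univ, d i * ‖(Y *ᵥ x) i‖ ^ 2 ≤ 0 := fun i _ ↦ by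
      obtain hi | hi := le_or_gt 0 (d i)
      · simp [hzero i hi]
      · exact mul_nonpos_of_nonpos_of_nonneg hi.le (sq_nonneg _)
    have hsum : ∑ i, d i * ‖(Y *ᵥ x) i‖ ^ 2 = 0 :=
      (sum_nonpos hle).antisymm <|
        re_star_dotProduct_mulVec_conjTranspose_mul_diagonal_mul Y d x ▸
          (RCLike.nonneg_iff.1 (h.dotProduct_mulVec_nonneg x)).1
    have hYx : Y *ᵥ x = 0 := by
      ext i
      obtain hi | hi := le_or_gt 0 (d i)
      · exact hzero i hi
      · simpa [hi.ne] using (sum_eq_zero_iff_of_nonpos hle).1 hsum i (mem_univ i)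
    exact hY (hYx.trans (mulVec_zero Y).symm)
  simpa [Fintype.card_subtype] using LinearMap.finrank_le_finrank_of_injective hR

/-- One half of the Courant-Fischer principle, for the subspace spanned by the columns of `Y`. -/
theorem card_le_card_filter_le_eigenvalues {A : Matrix n n 𝕜} (hA : A.IsHermitian) {c : ℝ}
    {Y : Matrix n k 𝕜} (hY : Function.Injective Y.mulVec) (h : c • (Yᴴ * Y) ≤ Yᴴ * A * Y) :
    Fintype.card k ≤ #{i | c ≤ hA.eigenvalues i} := by
  let U : Matrix n n 𝕜 := hA.eigenvectorUnitary
  have hU : U * Uᴴ = 1 := mem_unitaryGroup_iff.1 hA.eigenvectorUnitary.2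
  have hA_eq : A = U * diagonal (fun i ↦ (hA.eigenvalues i : 𝕜)) * Uᴴ := hA.spectral_theorem
  have hdiag : diagonal (fun i ↦ ((hA.eigenvalues i - c : ℝ) : 𝕜)) =
      diagonal (fun i ↦ (hA.eigenvalues i : 𝕜)) - c • (1 : Matrix n n 𝕜) := by
    rw [← diagonal_one, ← diagonal_smul, diagonal_sub]
    simp [RCLike.real_smul_eq_coe_mul]
  have hshift : Yᴴ * A * Y - c • (Yᴴ * Y) =
      (Uᴴ * Y)ᴴ * diagonal (fun i ↦ ((hA.eigenvalues i - c : ℝ) : 𝕜)) * (Uᴴ * Y) := by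
    rw [hdiag, conjTranspose_mul, conjTranspose_conjTranspose, Matrix.mul_sub, Matrix.sub_mul]
    nth_rw 1 [hA_eq]
    simp only [Matrix.mul_assoc, Matrix.mul_smul, Matrix.smul_mul, Matrix.one_mul,
      ← Matrix.mul_assoc U Uᴴ, hU]
  have hinj : Function.Injective (Uᴴ * Y).mulVec := by
    have hcomp : U.mulVec ∘ (Uᴴ * Y).mulVec = Y.mulVec := funext fun x ↦ by
      rw [Function.comp_apply, mulVec_mulVec, ← Matrix.mul_assoc, hU, Matrix.one_mul]
    exact .of_comp (hcomp ▸ hY)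
  calc Fintype.card k ≤ #{i | 0 ≤ hA.eigenvalues i - c} :=
        card_le_card_filter_nonneg_of_posSemidef hinj (hshift ▸ Matrix.le_iff.1 h)
    _ = #{i | c ≤ hA.eigenvalues i} := congrArg card (filter_congr fun i _ ↦ sub_nonneg)

theorem smul_one_le_of_le_eigenvalues {A : Matrix n n 𝕜} (hA : A.IsHermitian) {c : ℝ}
    (hc : ∀ i, c ≤ hA.eigenvalues i) : c • (1 : Matrix n n 𝕜) ≤ A := by
  rw [← Algebra.algebraMap_eq_smul_one]
  refine algebraMap_le_of_le_spectrum (fun x hx ↦ ?_) hA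
  obtain ⟨i, rfl⟩ := hA.spectrum_real_eq_range_eigenvalues ▸ hx
  exact hc i

end Eigenvalues

section Loewner

open scoped ComplexOrder MatrixOrder

variable {𝕜 n k : Type*} [RCLike 𝕜]

theorem mul_mul_conjTranspose_mono [Fintype n] [Finite k] {A B : Matrix n n 𝕜} (hAB : A ≤ B)
    (C : Matrix k n 𝕜) : C * A * Cᴴ ≤ C * B * Cᴴ := by
  rw [Matrix.le_iff, ← Matrix.sub_mul, ← Matrix.mul_sub]
  exact (Matrix.le_iff.1 hAB).mul_mul_conjTranspose_same C

variable [Fintype k] [DecidableEq k]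

theorem mulVec_injective_of_smul_one_le [Fintype n] {Y : Matrix n k 𝕜} {r : ℝ} (hr : 0 < r)
    (hY : r • (1 : Matrix k k 𝕜) ≤ Yᴴ * Y) : Function.Injective Y.mulVec := by
  have hone : (r • (1 : Matrix k k 𝕜)).PosDef := PosDef.one.smul hr
  have hGram : (Yᴴ * Y).PosDef := by
    simpa using hone.add_posSemidef (Matrix.le_iff.1 hY)
  have hcomp : Yᴴ.mulVec ∘ Y.mulVec = (Yᴴ * Y).mulVec := funext fun x ↦ mulVec_mulVec x Yᴴ Y
  exact .of_comp (hcomp ▸ mulVec_injective_of_isUnit hGram.isUnit)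

variable [DecidableEq n]

theorem card_le_card_filter_le_eigenvalues_mul_mul_conjTranspose [Fintype n] {Y : Matrix n k 𝕜}
    {M : Matrix k k 𝕜} {r m : ℝ} (hr : 0 < r) (hm : 0 ≤ m) (hY : r • (1 : Matrix k k 𝕜) ≤ Yᴴ * Y)
    (hM : m • (1 : Matrix k k 𝕜) ≤ M) (hS : (Y * M * Yᴴ).IsHermitian) :
    Fintype.card k ≤ #{i | m * r ≤ hS.eigenvalues i} := by
  refine card_le_card_filter_le_eigenvalues hS (mulVec_injective_of_smul_one_le hr hY) ?_
  have hGram : 0 ≤ Yᴴ * Y := (posSemidef_conjTranspose_mul_self Y).nonneg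
  have hGram_sq : r • (Yᴴ * Y) ≤ (Yᴴ * Y) * (Yᴴ * Y) := by
    have hcomm : Commute (Yᴴ * Y) (Yᴴ * Y - r • 1) :=
      (Commute.refl _).sub_right ((Commute.one_right _).smul_right r)
    simpa [mul_sub] using hcomm.mul_nonneg hGram (sub_nonneg.2 hY)
  calc (m * r) • (Yᴴ * Y) = m • r • (Yᴴ * Y) := mul_smul ..
    _ ≤ m • ((Yᴴ * Y) * (Yᴴ * Y)) := smul_le_smul_of_nonneg_left hGram_sq hm
    _ = (Yᴴ * Y) * (m • 1) * (Yᴴ * Y)ᴴ := by simp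
    _ ≤ (Yᴴ * Y) * M * (Yᴴ * Y)ᴴ := mul_mul_conjTranspose_mono hM _
    _ = Yᴴ * (Y * M * Yᴴ) * Y := by simp [Matrix.mul_assoc]

theorem smul_one_le_sum_mul_mul_conjTranspose [Finite n] {ι : Type*} [Fintype ι]
    {B : ι → Matrix n k 𝕜} {G : Matrix k k 𝕜} {c lam : ℝ} (hc : 0 ≤ c)
    (hG : c • (1 : Matrix k k 𝕜) ≤ G)
    (hB : lam • (1 : Matrix n n 𝕜) ≤ ∑ l, B l * (B l)ᴴ) :
    (c * lam) • (1 : Matrix n n 𝕜) ≤ ∑ l, B l * G * (B l)ᴴ := by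
  cases nonempty_fintype n
  calc (c * lam) • (1 : Matrix n n 𝕜) = c • lam • (1 : Matrix n n 𝕜) := mul_smul ..
    _ ≤ c • (∑ l, B l * (B l)ᴴ) := smul_le_smul_of_nonneg_left hB hc
    _ = ∑ l, B l * (c • (1 : Matrix k k 𝕜)) * (B l)ᴴ := by simp [smul_sum]
    _ ≤ ∑ l, B l * G * (B l)ᴴ := sum_le_sum fun l _ ↦ mul_mul_conjTranspose_mono hG (B l)

theorem posSemidef_sum_mul_conjTranspose_self {R n p ι : Type*} [Finite n] [Fintype p]
    [Fintype ι] [Ring R] [PartialOrder R] [StarRing R] [StarOrderedRing R] (Ω : ι → Matrix n p R) :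
    (∑ l, Ω l * (Ω l)ᴴ).PosSemidef :=
  posSemidef_sum _ fun l _ ↦ posSemidef_self_mul_conjTranspose (Ω l)

theorem card_le_card_filter_le_eigenvalues_sum_mul_conjTranspose {p q ι : Type*} [Fintype n]
    [Fintype p] [Fintype q] [DecidableEq q] [Fintype ι] {Y : Matrix n k 𝕜} {X : Matrix p q 𝕜}
    {B : ι → Matrix k q 𝕜} {r c lam : ℝ} (hr : 0 < r) (hc : 0 ≤ c) (hlam : 0 ≤ lam)
    (hY : r • (1 : Matrix k k 𝕜) ≤ Yᴴ * Y) (hX : c • (1 : Matrix q q 𝕜) ≤ Xᴴ * X)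
    (hB : lam • (1 : Matrix k k 𝕜) ≤ ∑ l, B l * (B l)ᴴ)
    (hS : (∑ l, (Y * B l * Xᴴ) * (Y * B l * Xᴴ)ᴴ).IsHermitian) :
    Fintype.card k ≤ #{i | c * lam * r ≤ hS.eigenvalues i} := by
  have hfactor : ∑ l, (Y * B l * Xᴴ) * (Y * B l * Xᴴ)ᴴ =
      Y * (∑ l, B l * (Xᴴ * X) * (B l)ᴴ) * Yᴴ := by
    simp only [conjTranspose_mul, conjTranspose_conjTranspose, Matrix.mul_sum, Matrix.sum_mul,
      Matrix.mul_assoc]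
  simp only [hfactor] at hS ⊢
  exact card_le_card_filter_le_eigenvalues_mul_mul_conjTranspose hr (mul_nonneg hc hlam) hY
    (smul_one_le_sum_mul_mul_conjTranspose hc hX hB) hS

end Loewner

/-- A membership matrix: `Z i a = 1` if node `i` belongs to community `a` and `Z i a = 0` otherwise,
each node belonging to exactly one community. That every community has a member is not part of the
definition. -/
structure IsMembershipMatrix {R n k : Type*} [Zero R] [One R] (Z : Matrix n k R) : Prop where
  eq_zero_or_one : ∀ i a, Z i a = 0 ∨ Z i a = 1
  existsUnique_eq_one : ∀ i, ∃! a, Z i a = 1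

namespace IsMembershipMatrix

open scoped ComplexOrder MatrixOrder

theorem star_mul_eq_ite {R n k : Type*} [NonAssocSemiring R] [DecidableEq R] [StarRing R]
    [DecidableEq k] {Z : Matrix n k R} (hZ : IsMembershipMatrix Z) (i : n) (a b : k) :
    star (Z i a) * Z i b = if a = b ∧ Z i a = 1 then 1 else 0 := by
  obtain ha | ha := hZ.eq_zero_or_one i a
  · simp [ha]
  · obtain rfl | hab := eq_or_ne a b
    · simp [ha]
    · have hb : Z i b = 0 := (hZ.eq_zero_or_one i b).resolve_right fun hb ↦
        hab ((hZ.existsUnique_eq_one i).unique ha hb)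
      simp [hab, hb]

variable {𝕜 n k : Type*} [RCLike 𝕜] [Fintype n] [DecidableEq n] [DecidableEq k]
  {Z : Matrix n k 𝕜}

theorem conjTranspose_mul_self_diagonal_mul (hZ : IsMembershipMatrix Z) (θ : n → 𝕜) :
    (diagonal θ * Z)ᴴ * (diagonal θ * Z) =
      diagonal fun a ↦ ((∑ i with Z i a = 1, ‖θ i‖ ^ 2 : ℝ) : 𝕜) := by
  ext a b
  have hterm : ∀ i, (diagonal θ * Z)ᴴ a i * (diagonal θ * Z) i b =
      if a = b ∧ Z i a = 1 then ((‖θ i‖ ^ 2 : ℝ) : 𝕜) else 0 := fun i ↦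
    calc (diagonal θ * Z)ᴴ a i * (diagonal θ * Z) i b
        = (star (θ i) * θ i) * (star (Z i a) * Z i b) := by
          rw [conjTranspose_apply, diagonal_mul, diagonal_mul, star_mul', mul_mul_mul_comm]
      _ = _ := by
          rw [hZ.star_mul_eq_ite, mul_ite, mul_one, mul_zero, RCLike.star_def, RCLike.conj_mul,
            RCLike.ofReal_pow]
  rw [Matrix.mul_apply, sum_congr rfl fun i _ ↦ hterm i, diagonal_apply]
  split_ifs with hab
  · simp only [hab, true_and, ← sum_filter, RCLike.ofReal_sum]
  · simp [hab]

theorem smul_one_le_conjTranspose_mul_self [Finite k] (hZ : IsMembershipMatrix Z) {θ : n → 𝕜}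
    {t : ℝ} (ht : 0 ≤ t) (hθ : ∀ i, t ≤ ‖θ i‖) {N : ℕ} (hN : ∀ a, N ≤ #{i | Z i a = 1}) :
    (t ^ 2 * N) • (1 : Matrix k k 𝕜) ≤ (diagonal θ * Z)ᴴ * (diagonal θ * Z) := by
  cases nonempty_fintype k
  have hentry : ∀ a, t ^ 2 * N ≤ ∑ i with Z i a = 1, ‖θ i‖ ^ 2 := fun a ↦
    calc t ^ 2 * N ≤ #{i | Z i a = 1} • t ^ 2 := by
          rw [nsmul_eq_mul, mul_comm]
          gcongr
          exact hN a
      _ ≤ ∑ i with Z i a = 1, ‖θ i‖ ^ 2 :=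
          card_nsmul_le_sum _ _ _ fun i _ ↦ pow_le_pow_left₀ ht (hθ i) 2
  rw [hZ.conjTranspose_mul_self_diagonal_mul, ← diagonal_one, ← diagonal_smul, Matrix.le_iff,
    diagonal_sub, posSemidef_diagonal_iff]
  intro a
  rw [Pi.smul_apply, RCLike.real_smul_eq_coe_mul, mul_one, ← RCLike.ofReal_sub,
    RCLike.ofReal_nonneg]
  exact sub_nonneg.2 (hentry a)

end IsMembershipMatrix

section MultilayerBlockModel

open scoped ComplexOrder MatrixOrder

variable {𝕜 n p k q ι : Type*} [RCLike 𝕜] [Fintype n] [Fintype p] [Fintype k] [Fintype q]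
  [Fintype ι] [DecidableEq n] [DecidableEq p] [DecidableEq k]

theorem stmt12_general {Zr : Matrix n k 𝕜} {Zc : Matrix p q 𝕜}
    (hZr : IsMembershipMatrix Zr) (hZrcol : ∀ a, ∃ i, Zr i a = 1) (hZc : IsMembershipMatrix Zc)
    {θr : n → 𝕜} {θc : p → 𝕜} (hθr : ∀ i, θr i ≠ 0) {B : ι → Matrix k q 𝕜} {Ω : ι → Matrix n p 𝕜}
    (hΩ : ∀ l, Ω l = diagonal θr * Zr * B l * Zcᴴ * diagonal θc)
    {S : Matrix n n 𝕜} (hS : S = ∑ l, Ω l * (Ω l)ᴴ) {θrmin θcmin : ℝ}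
    (hθrmin : IsLeast (Set.range fun i ↦ ‖θr i‖) θrmin)
    (hθcmin : IsLeast (Set.range fun j ↦ ‖θc j‖) θcmin) {nrmin ncmin : ℕ}
    (hnrmin : IsLeast (Set.range fun a ↦ #{i | Zr i a = 1}) nrmin)
    (hncmin : IsLeast (Set.range fun b ↦ #{j | Zc j b = 1}) ncmin)
    (hB : (∑ l, B l * (B l)ᴴ).IsHermitian) {lamB : ℝ}
    (hlamB : IsLeast (Set.range hB.eigenvalues) lamB) :
    S.PosSemidef ∧ ∃ hH : S.IsHermitian, Fintype.card k ≤
      #{i | θrmin ^ 2 * θcmin ^ 2 * nrmin * ncmin * lamB ≤ hH.eigenvalues i} := by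
  classical
  have hθrmin_pos : 0 < θrmin := by
    obtain ⟨i, rfl⟩ := hθrmin.1
    exact norm_pos_iff.2 (hθr i)
  have hθcmin_nonneg : 0 ≤ θcmin := by
    obtain ⟨j, rfl⟩ := hθcmin.1
    exact norm_nonneg _
  have hnrmin_pos : 0 < nrmin := by
    obtain ⟨a, rfl⟩ := hnrmin.1
    obtain ⟨i, hi⟩ := hZrcol a
    exact card_pos.2 ⟨i, by simpa using hi⟩
  have hlamB_nonneg : 0 ≤ lamB := by
    obtain ⟨a, rfl⟩ := hlamB.1
    exact (posSemidef_sum_mul_conjTranspose_self B).eigenvalues_nonneg a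
  have hSpsd : S.PosSemidef := hS ▸ posSemidef_sum_mul_conjTranspose_self Ω
  have hΩ_factor : Ω = fun l ↦ (diagonal θr * Zr) * B l * (diagonal (star θc) * Zc)ᴴ := by
    ext1 l
    rw [hΩ, conjTranspose_mul, diagonal_conjTranspose, star_star, ← Matrix.mul_assoc]
  have hY := hZr.smul_one_le_conjTranspose_mul_self (N := nrmin) hθrmin_pos.le
    (fun i ↦ hθrmin.2 ⟨i, rfl⟩) (fun a ↦ hnrmin.2 ⟨a, rfl⟩)
  have hX := hZc.smul_one_le_conjTranspose_mul_self (θ := star θc) (N := ncmin) hθcmin_nonneg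
    (fun j ↦ (hθcmin.2 ⟨j, rfl⟩).trans_eq (norm_star _).symm) (fun b ↦ hncmin.2 ⟨b, rfl⟩)
  subst hΩ_factor hS
  refine ⟨hSpsd, hSpsd.isHermitian, ?_⟩
  convert card_le_card_filter_le_eigenvalues_sum_mul_conjTranspose (by positivity) (by positivity)
    hlamB_nonneg hY hX (smul_one_le_of_le_eigenvalues hB fun a ↦ hlamB.2 ⟨a, rfl⟩)
    hSpsd.isHermitian using 4
  ring

end MultilayerBlockModel

/-- lower bound for the `K_r`-th largest eigenvalue of `S̃_r`.
`S̃_r` is symmetric positive semidefinite and at least `K_r` of its eigenvalues (with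
multiplicity) are at least `θ_{r,min}² θ_{c,min}² n_{r,min} n_{c,min} λ_min(∑_l B_l B_lᵀ)`;
i.e. its `K_r`-th largest eigenvalue is bounded below by this quantity. -/
theorem stmt12
    (nr nc Kr Kc L : ℕ)
    (hnr : 0 < nr) (hnc : 0 < nc) (hKr : 0 < Kr) (hKc : 0 < Kc) (hL : 0 < L)
    (Zr : Matrix (Fin nr) (Fin Kr) ℝ) (Zc : Matrix (Fin nc) (Fin Kc) ℝ)
    (hZr01 : ∀ i k, Zr i k = 0 ∨ Zr i k = 1)
    (hZrrow : ∀ i, ∃! k, Zr i k = 1)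
    (hZrcol : ∀ k, ∃ i, Zr i k = 1)
    (hZc01 : ∀ j k, Zc j k = 0 ∨ Zc j k = 1)
    (hZcrow : ∀ j, ∃! k, Zc j k = 1)
    (hZccol : ∀ k, ∃ j, Zc j k = 1)
    (θr : Fin nr → ℝ) (θc : Fin nc → ℝ)
    (hθr : ∀ i, 0 < θr i ∧ θr i ≤ 1) (hθc : ∀ j, 0 < θc j ∧ θc j ≤ 1)
    (B : Fin L → Matrix (Fin Kr) (Fin Kc) ℝ)
    (hB01 : ∀ l k k', 0 ≤ B l k k' ∧ B l k k' ≤ 1)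
    (Ωm : Fin L → Matrix (Fin nr) (Fin nc) ℝ)
    (hΩm : ∀ l, Ωm l = Matrix.diagonal θr * Zr * B l * (Zc)ᵀ * Matrix.diagonal θc)
    (Str : Matrix (Fin nr) (Fin nr) ℝ)
    (hStr : Str = ∑ l, Ωm l * (Ωm l)ᵀ)
    (θrmin θcmin : ℝ)
    (hθrmin : IsLeast (Set.range θr) θrmin)
    (hθcmin : IsLeast (Set.range θc) θcmin)
    (nrmin ncmin : ℕ)
    (hnrmin : IsLeast
      (Set.range fun k : Fin Kr => (Finset.univ.filter fun i => Zr i k = 1).card) nrmin)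
    (hncmin : IsLeast
      (Set.range fun k : Fin Kc => (Finset.univ.filter fun j => Zc j k = 1).card) ncmin)
    -- the smallest eigenvalue of `∑ l, B l * (B l)ᵀ`
    (hBH : (∑ l, B l * (B l)ᵀ).IsHermitian)
    (lamB : ℝ) (hlamB : IsLeast (Set.range hBH.eigenvalues) lamB) :
    Str.PosSemidef ∧
    ∃ hH : Str.IsHermitian,
      Kr ≤ (Finset.univ.filter fun i : Fin nr =>
        θrmin ^ 2 * θcmin ^ 2 * nrmin * ncmin * lamB ≤ hH.eigenvalues i).card := by
  have hnorm {n : ℕ} {θ : Fin n → ℝ} (hθ : ∀ i, 0 < θ i ∧ θ i ≤ 1) : θ = fun i ↦ ‖θ i‖ :=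
    funext fun i ↦ (Real.norm_of_nonneg (hθ i).1.le).symm
  simpa using stmt12_general ⟨hZr01, hZrrow⟩ hZrcol ⟨hZc01, hZcrow⟩ (fun i ↦ (hθr i).1.ne') hΩm hStr
    (hnorm hθr ▸ hθrmin) (hnorm hθc ▸ hθcmin) hnrmin hncmin hBH hlamB
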